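/- arXiv:1807.04394 — 9 statements merged into one kernel-verified Lean document; each statement's English description precedes it below -/
import Mathlib

section
/- Let p > 5 be a prime, K a field of characteristic p, and s, t nonzero elements of K. Then the polynomials x and y both belong to the radical of the ideal of K[x,y,z] generated by F = x*y*z^3 + s*x^5 + t*y^5 together with its three partial derivatives ∂F/∂x = y*z^3 + 5*s*x^4, ∂F/∂y = x*z^3 + 5*t*y^4, ∂F/∂z = 3*x*y*z^2. (Consequently the only singular point of the projective plane curve F = 0 is [0:0:1].) -/
/-!
Give `x`, `y`, `z` the weights `3`, `0`, `-1`. The term `x * y * z ^ 3` then has weight zero, and so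
does every power of `y`. The Euler operator `3 * x * ∂/∂x - z * ∂/∂z` multiplies each monomial by
its weight, so it sends `F` to `15 * s * x ^ 5`. As `15 * s` is a unit, `x ^ 5` lies in the ideal
of the partial derivatives. The argument for `y` is the same with `x` and `y` exchanged.
-/

open MvPolynomial

section Trinomial

variable {R σ : Type*}

theorem X_mul_pderiv_X_pow_self [CommSemiring R] (i : σ) (n : ℕ) :
    X i * pderiv i (X i ^ n) = (n : MvPolynomial σ R) * X i ^ n := by
  rw [X_pow_eq_monomial, X_mul_pderiv_monomial, Finsupp.single_eq_same, nsmul_eq_mul]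

theorem pderiv_X_pow_of_ne [CommSemiring R] {i j : σ} (h : j ≠ i) (n : ℕ) :
    pderiv i (X j ^ n : MvPolynomial σ R) = 0 := by
  rw [pderiv_pow, pderiv_X_of_ne h, mul_zero]

variable [CommRing R] {i j l : σ} {a b c m n : ℕ} {s t : R} {F : MvPolynomial σ R}

theorem weighted_euler_trinomial (hij : i ≠ j) (hil : i ≠ l) (hjl : j ≠ l)
    (hF : F = X i ^ a * X j ^ b * X l ^ c + C s * X i ^ m + C t * X j ^ n) :
    (c : MvPolynomial σ R) * X i * pderiv i F - (a : MvPolynomial σ R) * X l * pderiv l F =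
      C (c * m * s) * X i ^ m := by
  have hi : pderiv i F = X j ^ b * X l ^ c * pderiv i (X i ^ a) + C s * pderiv i (X i ^ m) := by
    simp only [hF, map_add, pderiv_mul, pderiv_C, pderiv_X_pow_of_ne hij.symm,
      pderiv_X_pow_of_ne hil.symm]
    ring
  have hl : pderiv l F = X i ^ a * X j ^ b * pderiv l (X l ^ c) := by
    simp only [hF, map_add, pderiv_mul, pderiv_C, pderiv_X_pow_of_ne hil, pderiv_X_pow_of_ne hjl]
    ring
  rw [hi, hl]
  simp only [map_mul, map_natCast]
  linear_combination
    (c : MvPolynomial σ R) * X j ^ b * X l ^ c * X_mul_pderiv_X_pow_self (R := R) i a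
      + (c : MvPolynomial σ R) * C s * X_mul_pderiv_X_pow_self (R := R) i m
      - (a : MvPolynomial σ R) * X i ^ a * X j ^ b * X_mul_pderiv_X_pow_self (R := R) l c

theorem X_mem_radical_of_pderiv_trinomial_mem (hij : i ≠ j) (hil : i ≠ l) (hjl : j ≠ l)
    (hc : IsUnit (c : R)) (hm : IsUnit (m : R)) (hs : IsUnit s)
    (hF : F = X i ^ a * X j ^ b * X l ^ c + C s * X i ^ m + C t * X j ^ n)
    {J : Ideal (MvPolynomial σ R)} (hi : pderiv i F ∈ J) (hl : pderiv l F ∈ J) :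
    X i ∈ J.radical := by
  have hunit : IsUnit (C (c * m * s) : MvPolynomial σ R) := ((hc.mul hm).mul hs).map C
  refine ⟨m, (J.unit_mul_mem_iff_mem hunit).mp ?_⟩
  rw [← weighted_euler_trinomial hij hil hjl hF]
  exact J.sub_mem (J.mul_mem_left _ hi) (J.mul_mem_left _ hl)

theorem stmt_0_general (hij : i ≠ j) (hil : i ≠ l) (hjl : j ≠ l)
    (hc : IsUnit (c : R)) (hm : IsUnit (m : R)) (hn : IsUnit (n : R))
    (hs : IsUnit s) (ht : IsUnit t)
    (hF : F = X i ^ a * X j ^ b * X l ^ c + C s * X i ^ m + C t * X j ^ n) :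
    X i ∈ (Ideal.span {pderiv i F, pderiv j F, pderiv l F}).radical ∧
      X j ∈ (Ideal.span {pderiv i F, pderiv j F, pderiv l F}).radical := by
  have hF' : F = X j ^ b * X i ^ a * X l ^ c + C t * X j ^ n + C s * X i ^ m := by rw [hF]; ring
  exact ⟨X_mem_radical_of_pderiv_trinomial_mem hij hil hjl hc hm hs hF
      (Ideal.subset_span (by simp)) (Ideal.subset_span (by simp)),
    X_mem_radical_of_pderiv_trinomial_mem hij.symm hjl hil hc hn ht hF'
      (Ideal.subset_span (by simp)) (Ideal.subset_span (by simp))⟩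

end Trinomial

theorem isUnit_natCast_of_lt_char {K : Type*} [DivisionRing K] (p : ℕ) [CharP K p] {n : ℕ}
    (hn : n ≠ 0) (hnp : n < p) : IsUnit (n : K) :=
  IsUnit.mk0 _ <| (CharP.cast_eq_zero_iff K p n).not.mpr (Nat.not_dvd_of_pos_of_lt hn.pos hnp)

/-- For a prime `p > 5`, a field `K` of characteristic `p` and nonzero `s, t : K`,
the variables `x` and `y` belong to the radical of the ideal generated by
`F = x*y*z^3 + s*x^5 + t*y^5` together with its three formal partial derivatives. -/
theorem stmt_0 (p : ℕ) (hp : p.Prime) (hp5 : 5 < p)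
    (K : Type*) [Field K] [CharP K p] (s t : K) (hs : s ≠ 0) (ht : t ≠ 0)
    (F : MvPolynomial (Fin 3) K)
    (hF : F = X 0 * X 1 * X 2 ^ 3 + C s * X 0 ^ 5 + C t * X 1 ^ 5) :
    X 0 ∈ (Ideal.span {F, pderiv 0 F, pderiv 1 F, pderiv 2 F} : Ideal (MvPolynomial (Fin 3) K)).radical ∧
    X 1 ∈ (Ideal.span {F, pderiv 0 F, pderiv 1 F, pderiv 2 F} : Ideal (MvPolynomial (Fin 3) K)).radical := by
  have h3 : IsUnit ((3 : ℕ) : K) := isUnit_natCast_of_lt_char p (by decide) (by lia)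
  have h5 : IsUnit ((5 : ℕ) : K) := isUnit_natCast_of_lt_char p (by decide) hp5
  have hle := Ideal.radical_mono
    (Ideal.span_mono (Set.subset_insert F {pderiv 0 F, pderiv 1 F, pderiv 2 F}))
  exact (stmt_0_general (a := 1) (b := 1) (by decide) (by decide) (by decide) h3 h5 h5
    hs.isUnit ht.isUnit (by simpa only [pow_one] using hF)).imp (hle ·) (hle ·)
end

section
/- Let K be an algebraically closed field of characteristic p > 5 and let s, t be nonzero elements of K. Then the quintic polynomial F = x*y*z^3 + s*x^5 + t*y^5 is irreducible in K[x,y,z]. -/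
open MvPolynomial

/-!
As a polynomial in `z`, `F` is a binomial `(x * y) * z ^ n + h` with
`h = s * x ^ a + t * y ^ b`. Reversing the order of its coefficients preserves irreducibility and
gives `h * z ^ n + x * y`, which is primitive and Eisenstein at the prime `x`: `x` divides `x * y`
exactly once and does not divide `h`.
-/

lemma isRelPrime_prime_mul {M : Type*} [CommMonoidWithZero M] [IsCancelMulZero M] {p b c : M}
    (hp : Prime p) (hpc : ¬p ∣ c) (hbc : IsRelPrime b c) : IsRelPrime (p * b) c := by
  intro d hd hdc
  rcases hp.left_dvd_or_dvd_right_of_dvd_mul hd with hpd | hdb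
  · exact absurd (hpd.trans hdc) hpc
  · exact hbc hdb hdc

section Univariate

open scoped Polynomial

lemma irreducible_mirror_iff {R : Type*} [Semiring R] [NoZeroDivisors R] {f : R[X]} :
    Irreducible f.mirror ↔ Irreducible f :=
  let mirrorEquiv : R[X] ≃* R[X] :=
    { Polynomial.mirror_involutive.toPerm with
      map_mul' := fun f g ↦ Polynomial.mirror_mul_of_domain (p := f) (q := g) }
  MulEquiv.irreducible_iff mirrorEquiv

lemma mirror_C_mul_X_pow_add_C {R : Type*} [Semiring R] {a b : R} (ha : a ≠ 0) (hb : b ≠ 0)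
    {n : ℕ} (hn : n ≠ 0) :
    (Polynomial.C a * Polynomial.X ^ n + Polynomial.C b).mirror =
      Polynomial.C b * Polynomial.X ^ n + Polynomial.C a := by
  have trailing : (Polynomial.C a * Polynomial.X ^ n + Polynomial.C b).natTrailingDegree = 0 :=
    Polynomial.natTrailingDegree_eq_zero.mpr (.inr (by simp [hn.symm, hb]))
  rw [Polynomial.mirror, trailing, pow_zero, mul_one, Polynomial.reverse_add_C,
    Polynomial.reverse_mul_X_pow, Polynomial.reverse_C, Polynomial.natDegree_C_mul_X_pow n a ha,
    add_comm]

lemma isPrimitive_C_mul_X_pow_add_C {R : Type*} [CommSemiring R] {a b : R}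
    (hab : IsRelPrime a b) {n : ℕ} (hn : n ≠ 0) :
    (Polynomial.C a * Polynomial.X ^ n + Polynomial.C b).IsPrimitive := by
  intro r hr
  rw [Polynomial.C_dvd_iff_dvd_coeff] at hr
  exact hab (by simpa [Polynomial.coeff_C, hn] using hr n) (by simpa [hn.symm] using hr 0)

variable {R : Type*} [CommRing R] [IsDomain R] {a b p : R} {n : ℕ}

lemma irreducible_C_mul_X_pow_add_C_of_prime_dvd_right (hab : IsRelPrime a b) (hn : n ≠ 0)
    (hp : Prime p) (hpa : ¬p ∣ a) (hpb : p ∣ b) (hp2b : ¬p ^ 2 ∣ b) :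
    Irreducible (Polynomial.C a * Polynomial.X ^ n + Polynomial.C b) := by
  have ha : a ≠ 0 := by rintro rfl; exact hpa (dvd_zero p)
  have natDegree_eq : (Polynomial.C a * Polynomial.X ^ n + Polynomial.C b).natDegree = n := by
    rw [Polynomial.natDegree_add_C, Polynomial.natDegree_C_mul_X_pow n a ha]
  refine Polynomial.irreducible_of_eisenstein_criterion (P := Ideal.span {p})
    ((Ideal.span_singleton_prime hp.ne_zero).mpr hp) ?_ (fun m hm ↦ ?_) ?_ ?_
    (isPrimitive_C_mul_X_pow_add_C hab hn)
  · simpa [Polynomial.leadingCoeff, natDegree_eq, Polynomial.coeff_C, hn,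
      Ideal.mem_span_singleton] using hpa
  · have hmn : m < n := natDegree_eq ▸ Polynomial.coe_lt_degree.mp hm
    rcases eq_or_ne m 0 with rfl | hm0
    · simpa [hn.symm, Ideal.mem_span_singleton] using hpb
    · simp [Polynomial.coeff_X_pow, Polynomial.coeff_C, hmn.ne, hm0]
  · rw [← Polynomial.natDegree_pos_iff_degree_pos, natDegree_eq]
    exact Nat.pos_of_ne_zero hn
  · simpa [hn.symm, Ideal.span_singleton_pow, Ideal.mem_span_singleton] using hp2b

lemma irreducible_C_mul_X_pow_add_C_of_prime_dvd_left (hab : IsRelPrime a b) (hn : n ≠ 0)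
    (hp : Prime p) (hpa : p ∣ a) (hp2a : ¬p ^ 2 ∣ a) (hpb : ¬p ∣ b) :
    Irreducible (Polynomial.C a * Polynomial.X ^ n + Polynomial.C b) := by
  have ha : a ≠ 0 := by rintro rfl; exact hp2a (dvd_zero _)
  have hb : b ≠ 0 := by rintro rfl; exact hpb (dvd_zero p)
  rw [← irreducible_mirror_iff, mirror_C_mul_X_pow_add_C ha hb hn]
  exact irreducible_C_mul_X_pow_add_C_of_prime_dvd_right hab.symm hn hp hpb hpa hp2a

end Univariate

section Multivariate

variable {σ R : Type*} [CommRing R] {s t : R} {i j : σ} {a b : ℕ}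

lemma not_X_dvd_C_mul_X_pow_add_C_mul_X_pow (hij : i ≠ j) (ht : t ≠ 0) (ha : a ≠ 0) :
    ¬(X i : MvPolynomial σ R) ∣ C s * X i ^ a + C t * X j ^ b := by
  rw [dvd_add_right ((dvd_pow_self _ ha).mul_left _), C_mul_X_pow_eq_monomial, X_dvd_monomial]
  simp [ht, hij]

variable [IsDomain R]

lemma isRelPrime_X_mul_X_C_mul_X_pow_add_C_mul_X_pow (hij : i ≠ j) (hs : s ≠ 0) (ht : t ≠ 0)
    (ha : a ≠ 0) (hb : b ≠ 0) :
    IsRelPrime (X i * X j : MvPolynomial σ R) (C s * X i ^ a + C t * X j ^ b) := by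
  refine isRelPrime_prime_mul X_prime (not_X_dvd_C_mul_X_pow_add_C_mul_X_pow hij ht ha) ?_
  rw [X_prime.irreducible.isRelPrime_iff_not_dvd, add_comm]
  exact not_X_dvd_C_mul_X_pow_add_C_mul_X_pow hij.symm hs hb

lemma not_X_sq_dvd_X_mul_X (hij : i ≠ j) : ¬(X i ^ 2 : MvPolynomial σ R) ∣ X i * X j := by
  rwa [sq, mul_dvd_mul_iff_left (X_ne_zero i), X_dvd_X]

theorem stmt_2_general {k : σ} {n : ℕ} (hij : i ≠ j) (hik : i ≠ k) (hjk : j ≠ k)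
    (hs : s ≠ 0) (ht : t ≠ 0) (ha : a ≠ 0) (hb : b ≠ 0) (hn : n ≠ 0) :
    Irreducible (X i * X j * X k ^ n + C s * X i ^ a + C t * X j ^ b : MvPolynomial σ R) := by
  classical
  let e : MvPolynomial σ R ≃ₐ[R] Polynomial (MvPolynomial {l // l ≠ k} R) :=
    (renameEquiv R (Equiv.optionSubtypeNe k).symm).trans (optionEquivLeft R _)
  let x : {l // l ≠ k} := ⟨i, hik⟩
  let y : {l // l ≠ k} := ⟨j, hjk⟩
  have hxy : x ≠ y := Subtype.coe_ne_coe.mp hij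
  have binomial : e (X i * X j * X k ^ n + C s * X i ^ a + C t * X j ^ b) =
      Polynomial.C (X x * X y) * Polynomial.X ^ n +
        Polynomial.C (C s * X x ^ a + C t * X y ^ b) := by
    simp [e, x, y, hik, hjk, add_assoc]
  rw [← MulEquiv.irreducible_iff e, binomial]
  exact irreducible_C_mul_X_pow_add_C_of_prime_dvd_left
    (isRelPrime_X_mul_X_C_mul_X_pow_add_C_mul_X_pow hxy hs ht ha hb) hn X_prime
    (dvd_mul_right _ _) (not_X_sq_dvd_X_mul_X hxy)
    (not_X_dvd_C_mul_X_pow_add_C_mul_X_pow hxy ht ha)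

end Multivariate

/-- Over an algebraically closed field of characteristic `p > 5`, for nonzero `s, t`,
the quintic `F = x*y*z^3 + s*x^5 + t*y^5` is irreducible in `K[x,y,z]`. -/
theorem stmt_2 (p : ℕ) (hp : p.Prime) (hp5 : 5 < p)
    (K : Type*) [Field K] [IsAlgClosed K] [CharP K p]
    (s t : K) (hs : s ≠ 0) (ht : t ≠ 0) :
    Irreducible
      (X 0 * X 1 * X 2 ^ 3 + C s * X 0 ^ 5 + C t * X 1 ^ 5 : MvPolynomial (Fin 3) K) :=
  stmt_2_general (by decide) (by decide) (by decide) hs ht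
    (by decide) (by decide) (by decide)
end

section
/- Let p be a prime with p ≡ 2 (mod 3), K a field of characteristic p, s, t nonzero elements of K, and F = x*y*z^3 + s*x^5 + t*y^5 ∈ K[x,y,z]. Then for all nonnegative integers i and j, the coefficient of x^i*y^j*z^(p-1) in F^(p-1) is zero and the coefficient of x^i*y^j*z^(2p-2) in F^(p-1) is zero. -/
open MvPolynomial

/-!
Every monomial of `F = x*y*z^3 + s*x^5 + t*y^5` has `z`-exponent divisible by `3`: give `z` weight
`1 : ZMod 3` and the other variables weight `0`, and `F` is weighted homogeneous of weight `0`.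
Hence so is each power of `F`. If `p ≡ 2 (mod 3)`, then `p - 1 ≡ 1` and `2 * p - 2 ≡ 2 (mod 3)`.
-/

section

variable {R : Type*} [CommSemiring R]

theorem coeff_pow_eq_zero_of_not_dvd {σ : Type*} [DecidableEq σ] {m : ℕ} {i : σ}
    {f : MvPolynomial σ R} (hf : IsWeightedHomogeneous (Pi.single i (1 : ZMod m)) f 0) (n : ℕ)
    {d : σ →₀ ℕ} (hd : ¬ m ∣ d i) : coeff d (f ^ n) = 0 := by
  refine (hf.pow n).coeff_eq_zero d ?_
  rwa [Finsupp.weight_single_index, nsmul_one, smul_zero, Ne, ZMod.natCast_eq_zero_iff]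

theorem isWeightedHomogeneous_quintic (s t : R) :
    IsWeightedHomogeneous (Pi.single 2 (1 : ZMod 3))
      (X 0 * X 1 * X 2 ^ 3 + C s * X 0 ^ 5 + C t * X 1 ^ 5 : MvPolynomial (Fin 3) R) 0 := by
  let w : Fin 3 → ZMod 3 := Pi.single 2 1
  have hx : IsWeightedHomogeneous w (X 0 : MvPolynomial (Fin 3) R) 0 :=
    isWeightedHomogeneous_X R w 0
  have hy : IsWeightedHomogeneous w (X 1 : MvPolynomial (Fin 3) R) 0 :=
    isWeightedHomogeneous_X R w 1
  have hz : IsWeightedHomogeneous w (X 2 ^ 3 : MvPolynomial (Fin 3) R) 0 :=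
    (isWeightedHomogeneous_X R w 2).pow 3
  have hxyz := (hx.mul hy).mul hz
  have hx5 := (hx.pow 5).C_mul s
  have hy5 := (hy.pow 5).C_mul t
  simp only [smul_zero, add_zero] at hxyz hx5 hy5
  exact (hxyz.add hx5).add hy5

theorem stmt_4_general (s t : R) (n : ℕ) {d : Fin 3 →₀ ℕ} (hd : ¬ 3 ∣ d 2) :
    coeff d ((X 0 * X 1 * X 2 ^ 3 + C s * X 0 ^ 5 + C t * X 1 ^ 5 :
      MvPolynomial (Fin 3) R) ^ n) = 0 :=
  coeff_pow_eq_zero_of_not_dvd (isWeightedHomogeneous_quintic s t) n hd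

end

/-- If `p ≡ 2 (mod 3)`, then in `F^(p-1)` with `F = x*y*z^3 + s*x^5 + t*y^5`,
the coefficients of `x^i*y^j*z^(p-1)` and of `x^i*y^j*z^(2p-2)` vanish for all `i, j`. -/
theorem stmt_4 (p : ℕ) (hp : p.Prime) (h3 : p % 3 = 2)
    (K : Type*) [Field K] [CharP K p] (s t : K) (hs : s ≠ 0) (ht : t ≠ 0)
    (i j : ℕ) :
    MvPolynomial.coeff
      (Finsupp.single (0 : Fin 3) i + Finsupp.single 1 j + Finsupp.single 2 (p - 1))
      ((X 0 * X 1 * X 2 ^ 3 + C s * X 0 ^ 5 + C t * X 1 ^ 5 :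
          MvPolynomial (Fin 3) K) ^ (p - 1)) = 0 ∧
    MvPolynomial.coeff
      (Finsupp.single (0 : Fin 3) i + Finsupp.single 1 j + Finsupp.single 2 (2 * p - 2))
      ((X 0 * X 1 * X 2 ^ 3 + C s * X 0 ^ 5 + C t * X 1 ^ 5 :
          MvPolynomial (Fin 3) K) ^ (p - 1)) = 0 := by
  constructor <;> refine stmt_4_general s t (p - 1) ?_ <;>
    simp only [Finsupp.add_apply, Finsupp.single_apply, Fin.reduceEq, if_true, if_false] <;> omega
end

section
/- Let p be a prime with p ≡ 2 (mod 3) and with p ≡ 1 (mod 5) or p ≡ 4 (mod 5). Then for each of the 25 exponent triples (i,j,k) in E(p), there is no triple (a,b,c) of integers with 0 ≤ a,b,c ≤ p-1 satisfying the linear system a + b + c = p-1, a + 5b = i, a + 5c = j, 3a = k. -/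
open MvPolynomial

/-- The set of 25 exponent triples from the Hasse–Witt criterion for
`x*y*z^3 + s*x^5 + t*y^5`. -/
def Ep (p : ℕ) : Finset (ℕ × ℕ × ℕ) :=
  { (3*p-3, p-1, p-1), (3*p-1, p-3, p-1), (3*p-2, p-2, p-1), (3*p-2, p-1, p-2),
    (3*p-1, p-2, p-2),
    (p-3, 3*p-1, p-1), (p-1, 3*p-3, p-1), (p-2, 3*p-2, p-1), (p-2, 3*p-1, p-2),
    (p-1, 3*p-2, p-2),
    (2*p-3, 2*p-1, p-1), (2*p-1, 2*p-3, p-1), (2*p-2, 2*p-2, p-1), (2*p-2, 2*p-1, p-2),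
    (2*p-1, 2*p-2, p-2),
    (2*p-3, p-1, 2*p-1), (2*p-1, p-3, 2*p-1), (2*p-2, p-2, 2*p-1), (2*p-2, p-1, 2*p-2),
    (2*p-1, p-2, 2*p-2),
    (p-3, 2*p-1, 2*p-1), (p-1, 2*p-3, 2*p-1), (p-2, 2*p-2, 2*p-1), (p-2, 2*p-1, 2*p-2),
    (p-1, 2*p-2, 2*p-2) }

/-!
Reading the system modulo `3` and modulo `5`, a solution forces `3 ∣ k` and `i ≡ j (mod 5)`.
When `p ≡ 2 (mod 3)` the first condition leaves only the exponent triples with `k = p - 2` or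
`k = 2p - 1`, for which `|i - j|` is `1`, `2p ± 1`, `p` or `p ± 2`. For `p ≡ ±1 (mod 5)` none of
these is a multiple of `5`.
-/

/-- The possible values of `|i - j|` for an exponent triple `(i, j, k)` in `Ep p` with `k = p - 2`
or `k = 2 * p - 1`. The values are integers, so the subtractions are not truncated. -/
def exponentGaps (p : ℤ) : Finset ℤ :=
  {1, p - 2, p, p + 2, 2 * p - 1, 2 * p + 1}

theorem eq_sub_two_or_eq_two_mul_sub_one_of_mem_Ep {p i j k : ℕ} (h3 : p % 3 = 2)
    (hijk : (i, j, k) ∈ Ep p) (hk : 3 ∣ k) : k = p - 2 ∨ k = 2 * p - 1 := by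
  simp only [Ep, Finset.mem_insert, Finset.mem_singleton, Prod.mk.injEq] at hijk
  omega

theorem abs_sub_mem_exponentGaps {p i j k : ℕ} (two_le : 2 ≤ p) (hijk : (i, j, k) ∈ Ep p)
    (hk : k = p - 2 ∨ k = 2 * p - 1) : |(i : ℤ) - j| ∈ exponentGaps p := by
  simp only [Ep, Finset.mem_insert, Finset.mem_singleton, Prod.mk.injEq] at hijk
  simp only [exponentGaps, Finset.mem_insert, Finset.mem_singleton, abs_eq_max_neg]
  casesm* _ ∨ _ <;> omega

theorem not_five_dvd_of_mem_exponentGaps {p d : ℤ} (h5 : p % 5 = 1 ∨ p % 5 = 4)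
    (hd : d ∈ exponentGaps p) : ¬ 5 ∣ d := by
  simp only [exponentGaps, Finset.mem_insert, Finset.mem_singleton] at hd
  omega

theorem stmt_5_general (p : ℕ) (h3 : p % 3 = 2) (h5 : p % 5 = 1 ∨ p % 5 = 4) :
    ∀ ijk ∈ Ep p, ¬ ∃ a b c : ℤ,
      a + 5 * b = ijk.1 ∧ a + 5 * c = ijk.2.1 ∧ 3 * a = ijk.2.2 := by
  rintro ⟨i, j, k⟩ hijk ⟨a, b, c, hi, hj, hk⟩
  have three_dvd : 3 ∣ k := Int.natCast_dvd_natCast.mp ⟨a, hk.symm⟩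
  have five_dvd : (5 : ℤ) ∣ i - j := ⟨b - c, by linear_combination hj - hi⟩
  have gap_mem : |(i : ℤ) - j| ∈ exponentGaps p :=
    abs_sub_mem_exponentGaps (by omega) hijk
      (eq_sub_two_or_eq_two_mul_sub_one_of_mem_Ep h3 hijk three_dvd)
  exact not_five_dvd_of_mem_exponentGaps (mod_cast h5) gap_mem ((dvd_abs _ _).mpr five_dvd)

/-- If `p ≡ 2 (mod 3)` and `p ≡ 1` or `4 (mod 5)`, then for each of the 25
exponent triples `(i,j,k)` in `Ep p`, the system `a+b+c = p-1`, `a+5b = i`,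
`a+5c = j`, `3a = k` has no solution with `0 ≤ a, b, c ≤ p-1`. -/
theorem stmt_5 (p : ℕ) (hp : p.Prime) (h3 : p % 3 = 2)
    (h5 : p % 5 = 1 ∨ p % 5 = 4) :
    ∀ ijk ∈ Ep p, ¬ ∃ a b c : ℕ, a ≤ p - 1 ∧ b ≤ p - 1 ∧ c ≤ p - 1 ∧
      a + b + c = p - 1 ∧ a + 5 * b = ijk.1 ∧ a + 5 * c = ijk.2.1 ∧
      3 * a = ijk.2.2 := by
  rintro ijk hijk ⟨a, b, c, -, -, -, -, hi, hj, hk⟩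
  exact stmt_5_general p h3 h5 ijk hijk ⟨a, b, c, mod_cast hi, mod_cast hj, mod_cast hk⟩
end

section
/- Let p > 5 be a prime with p ≡ 2 (mod 3) and with p ≡ 1 (mod 5) or p ≡ 4 (mod 5). Let K be a field of characteristic p, s, t nonzero elements of K, and F = x*y*z^3 + s*x^5 + t*y^5 ∈ K[x,y,z]. Then for every (i,j,k) in E(p), the coefficient of x^i*y^j*z^k in F^(p-1) is zero. -/
open MvPolynomial

/-!
The group `μ₃ × μ₅` of pairs `(ω, ζ)` acts by `(x, y, z) ↦ (ζ x, ζ⁻¹ y, ω z)` and fixes the three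
monomials of `F`, hence every power of `F`. So a monomial `x^i * y^j * z^k` can occur in a power
of `F` only if `3 ∣ k` and `i ≡ j [MOD 5]`. Since `p ≡ 2 (mod 3)`, the first condition leaves only
the triples of `E(p)` with `k = p - 2` or `k = 2 * p - 1`, and for these the difference of `i` and
`j` is one of `1`, `p`, `p ± 2`, `2 * p ± 1`, none of which is divisible by `5` when
`p ≡ ±1 (mod 5)`. Grading by the character group `ZMod 3 × ZMod 5` expresses the invariance over
coefficient rings without roots of unity.
-/

section Trinomial

variable {R : Type*} [CommSemiring R]

/-- The trinomial `x * y * z ^ m + s * x ^ n + t * y ^ n`; the polynomial `F` is the case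
`m = 3`, `n = 5`. -/
noncomputable def trinomial (m n : ℕ) (s t : R) : MvPolynomial (Fin 3) R :=
  X 0 * X 1 * X 2 ^ m + C s * X 0 ^ n + C t * X 1 ^ n

/-- The weights of `x`, `y`, `z` in the grading for which `trinomial m n s t` is homogeneous of
weight zero: the characters by which a diagonal symmetry group `μₘ × μₙ` of it acts on the
variables. -/
def trinomialWeight (m n : ℕ) : Fin 3 → ZMod m × ZMod n :=
  ![(0, 1), (0, -1), (1, 0)]

theorem isWeightedHomogeneous_trinomial (m n : ℕ) (s t : R) :
    IsWeightedHomogeneous (trinomialWeight m n) (trinomial m n s t) 0 := by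
  have homogeneous_X := isWeightedHomogeneous_X R (trinomialWeight m n)
  have weight_xyz : IsWeightedHomogeneous (trinomialWeight m n)
      (X 0 * X 1 * X 2 ^ m : MvPolynomial (Fin 3) R) 0 := by
    simpa [trinomialWeight, Prod.zero_eq_mk] using
      ((homogeneous_X 0).mul (homogeneous_X 1)).mul ((homogeneous_X 2).pow m)
  have weight_x : IsWeightedHomogeneous (trinomialWeight m n) (C s * X 0 ^ n) 0 := by
    simpa [trinomialWeight, Prod.zero_eq_mk] using ((homogeneous_X 0).pow n).C_mul s
  have weight_y : IsWeightedHomogeneous (trinomialWeight m n) (C t * X 1 ^ n) 0 := by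
    simpa [trinomialWeight, Prod.zero_eq_mk] using ((homogeneous_X 1).pow n).C_mul t
  exact (weight_xyz.add weight_x).add weight_y

theorem weight_trinomialWeight_eq_zero_iff {m n i j k : ℕ} :
    Finsupp.weight (trinomialWeight m n)
        (Finsupp.single 0 i + Finsupp.single 1 j + Finsupp.single 2 k) = 0 ↔
      m ∣ k ∧ i ≡ j [MOD n] := by
  have weight_eq : Finsupp.weight (trinomialWeight m n)
      (Finsupp.single 0 i + Finsupp.single 1 j + Finsupp.single 2 k) =
        ((k : ZMod m), (i - j : ZMod n)) := by
    simp [Finsupp.weight_single, trinomialWeight, sub_eq_add_neg]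
  rw [weight_eq, Prod.mk_eq_zero, ZMod.natCast_eq_zero_iff, sub_eq_zero,
    ZMod.natCast_eq_natCast_iff]

theorem coeff_trinomial_pow_eq_zero {m n i j k : ℕ} (s t : R) (N : ℕ)
    (h : m ∣ k → ¬ i ≡ j [MOD n]) :
    coeff (Finsupp.single 0 i + Finsupp.single 1 j + Finsupp.single 2 k)
      (trinomial m n s t ^ N) = 0 := by
  have weight_pow := (isWeightedHomogeneous_trinomial m n s t).pow N
  rw [smul_zero] at weight_pow
  refine weight_pow.coeff_eq_zero _ fun weight_eq => ?_
  obtain ⟨dvd_k, modEq⟩ := weight_trinomialWeight_eq_zero_iff.mp weight_eq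
  exact h dvd_k modEq

end Trinomial

section Exponents

variable {p i j k : ℕ}

theorem natAbs_sub_mem_of_mem_Ep_of_three_dvd (h3 : p % 3 = 2)
    (h : (i, j, k) ∈ Ep p) (hk : 3 ∣ k) :
    ((i : ℤ) - j).natAbs ∈ ({1, p - 2, p, p + 2, 2 * p - 1, 2 * p + 1} : Finset ℕ) := by
  simp only [Ep, Finset.mem_insert, Finset.mem_singleton, Prod.mk.injEq] at h ⊢
  omega

theorem not_modEq_five_of_mem_Ep_of_three_dvd (h3 : p % 3 = 2) (h5 : p % 5 = 1 ∨ p % 5 = 4)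
    (h : (i, j, k) ∈ Ep p) (hk : 3 ∣ k) : ¬ i ≡ j [MOD 5] := by
  have natAbs_sub_mem := natAbs_sub_mem_of_mem_Ep_of_three_dvd h3 h hk
  intro modEq
  have five_dvd : 5 ∣ ((i : ℤ) - j).natAbs := Int.natCast_dvd.mp modEq.symm.dvd
  simp only [Finset.mem_insert, Finset.mem_singleton] at natAbs_sub_mem
  omega

end Exponents

theorem stmt_6_general {p : ℕ} (h3 : p % 3 = 2) (h5 : p % 5 = 1 ∨ p % 5 = 4)
    {R : Type*} [CommSemiring R] (s t : R) (N : ℕ) :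
    ∀ ijk ∈ Ep p,
      MvPolynomial.coeff
        (Finsupp.single (0 : Fin 3) ijk.1 + Finsupp.single 1 ijk.2.1 +
          Finsupp.single 2 ijk.2.2)
        ((X 0 * X 1 * X 2 ^ 3 + C s * X 0 ^ 5 + C t * X 1 ^ 5 : MvPolynomial (Fin 3) R) ^ N) =
      0 :=
  fun _ mem_Ep => coeff_trinomial_pow_eq_zero s t N
    (not_modEq_five_of_mem_Ep_of_three_dvd h3 h5 mem_Ep)

/-- If `p > 5` is a prime with `p ≡ 2 (mod 3)` and `p ≡ 1` or `4 (mod 5)`, then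
every coefficient of `F^(p-1)` at an exponent triple in `Ep p` vanishes, where
`F = x*y*z^3 + s*x^5 + t*y^5`. -/
theorem stmt_6 (p : ℕ) (hp : p.Prime) (hp5 : 5 < p) (h3 : p % 3 = 2)
    (h5 : p % 5 = 1 ∨ p % 5 = 4)
    (K : Type*) [Field K] [CharP K p] (s t : K) (hs : s ≠ 0) (ht : t ≠ 0) :
    ∀ ijk ∈ Ep p,
      MvPolynomial.coeff
        (Finsupp.single (0 : Fin 3) ijk.1 + Finsupp.single 1 ijk.2.1 +
          Finsupp.single 2 ijk.2.2)
        ((X 0 * X 1 * X 2 ^ 3 + C s * X 0 ^ 5 + C t * X 1 ^ 5 :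
            MvPolynomial (Fin 3) K) ^ (p - 1)) = 0 :=
  stmt_6_general h3 h5 s t (p - 1)
end

section
/- Let p > 5 be a prime with p ≡ 2 (mod 3) and p ≡ 3 (mod 5), K a field of characteristic p, s, t nonzero elements of K, and F = x*y*z^3 + s*x^5 + t*y^5 ∈ K[x,y,z]. Then the coefficient of x^(3p-2)*y^(p-1)*z^(p-2) in F^(p-1) equals s^(4(2p-1)/15) * t^((2p-1)/15) * M, where M is the image in K of the multinomial coefficient (p-1)!/( ((p-2)/3)! * (4(2p-1)/15)! * ((2p-1)/15)! ); in particular this coefficient is nonzero in K. -/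
open MvPolynomial

/-!
The exponent vectors of the three monomials of `F` are linearly independent, so every monomial of
`F ^ n` arises from exactly one term of the multinomial expansion. Both congruences together say
`p ≡ 8 (mod 15)`, so the exponents of that term are integers for the monomial in question; they add
up to `p - 1`, hence its multinomial coefficient divides `(p - 1)!` and is prime to `p`.
-/

theorem not_dvd_multinomial_of_sum_lt {ι : Type*} {p : ℕ} (hp : p.Prime) (s : Finset ι) (k : ι → ℕ)
    (hk : ∑ i ∈ s, k i < p) : ¬p ∣ Nat.multinomial s k := by
  intro hdvd
  have hfact : p ∣ (∑ i ∈ s, k i).factorial :=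
    hdvd.trans (Dvd.intro_left _ (Nat.multinomial_spec s k))
  exact hk.not_ge (hp.dvd_factorial.mp hfact)

section MultinomialExpansion

variable {ι σ R : Type*} [CommSemiring R]

theorem sum_monomial_pow [DecidableEq ι] (s : Finset ι) (e : ι → σ →₀ ℕ) (c : ι → R) (n : ℕ) :
    (∑ i ∈ s, monomial (e i) (c i)) ^ n =
      ∑ k ∈ s.piAntidiag n,
        monomial (∑ i ∈ s, k i • e i) (Nat.multinomial s k * ∏ i ∈ s, c i ^ k i) := by
  simp only [Finset.sum_pow_eq_sum_piAntidiag, monomial_pow, ← monomial_sum_prod,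
    ← map_natCast (C : R →+* MvPolynomial σ R), C_mul_monomial]

theorem coeff_sum_monomial_pow_of_linearIndependent [Fintype ι] {e : ι → σ →₀ ℕ}
    (he : LinearIndependent ℕ e) (c : ι → R) (k : ι → ℕ) :
    coeff (∑ i, k i • e i) ((∑ i, monomial (e i) (c i)) ^ ∑ i, k i) =
      Nat.multinomial Finset.univ k * ∏ i, c i ^ k i := by
  classical
  have hinj (l : ι → ℕ) : ∑ i, l i • e i = ∑ i, k i • e i ↔ l = k :=
    ⟨fun h => funext (Fintype.linearIndependent_iffₛ.mp he l k h), fun h => by rw [h]⟩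
  simp [sum_monomial_pow, coeff_sum, coeff_monomial, hinj]

end MultinomialExpansion

/-- The exponent vectors of the monomials `x * y * z ^ 3`, `x ^ 5` and `y ^ 5` of `F`, where the
variables `x`, `y`, `z` are indexed by `0`, `1`, `2`. -/
noncomputable def quinticExponent : Fin 3 → Fin 3 →₀ ℕ :=
  ![.single 0 1 + .single 1 1 + .single 2 3, .single 0 5, .single 1 5]

theorem sum_smul_quinticExponent (k : Fin 3 → ℕ) :
    ∑ i, k i • quinticExponent i =
      .single 0 (k 0 + 5 * k 1) + .single 1 (k 0 + 5 * k 2) + .single 2 (3 * k 0) := by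
  ext j
  fin_cases j <;> simp [quinticExponent, Fin.sum_univ_three, mul_comm]

theorem linearIndependent_quinticExponent : LinearIndependent ℕ quinticExponent := by
  rw [Fintype.linearIndependent_iffₛ]
  intro k l h
  rw [sum_smul_quinticExponent, sum_smul_quinticExponent] at h
  have hx : k 0 + 5 * k 1 = l 0 + 5 * l 1 := by simpa using DFunLike.congr_fun h 0
  have hy : k 0 + 5 * k 2 = l 0 + 5 * l 2 := by simpa using DFunLike.congr_fun h 1
  have hz : k 0 = l 0 := by simpa using DFunLike.congr_fun h 2
  rw [Fin.forall_fin_succ, Fin.forall_fin_two]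
  simp only [Fin.succ_zero_eq_one, Fin.succ_one_eq_two]
  omega

section Quintic

variable {R : Type*} [CommSemiring R]

theorem quintic_eq_sum_monomial (s t : R) :
    (X 0 * X 1 * X 2 ^ 3 + C s * X 0 ^ 5 + C t * X 1 ^ 5 : MvPolynomial (Fin 3) R) =
      ∑ i, monomial (quinticExponent i) (![1, s, t] i) := by
  simp [quinticExponent, Fin.sum_univ_three, X, monomial_mul, monomial_pow, C_mul_monomial]

theorem coeff_quintic_pow (s t : R) (a b c : ℕ) :
    coeff (Finsupp.single (0 : Fin 3) (a + 5 * b) + Finsupp.single 1 (a + 5 * c) +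
        Finsupp.single 2 (3 * a))
      ((X 0 * X 1 * X 2 ^ 3 + C s * X 0 ^ 5 + C t * X 1 ^ 5 : MvPolynomial (Fin 3) R) ^
        (a + b + c)) =
      s ^ b * t ^ c * (Nat.multinomial Finset.univ ![a, b, c] : R) := by
  have h := coeff_sum_monomial_pow_of_linearIndependent linearIndependent_quinticExponent
    ![1, s, t] ![a, b, c]
  rw [sum_smul_quinticExponent, ← quintic_eq_sum_monomial] at h
  simpa [Fin.sum_univ_three, Fin.prod_univ_three, mul_comm] using h

theorem coeff_quintic_pow_pred {p : ℕ} (h3 : p % 3 = 2) (h5 : p % 5 = 3) (s t : R) :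
    coeff (Finsupp.single (0 : Fin 3) (3 * p - 2) + Finsupp.single 1 (p - 1) +
        Finsupp.single 2 (p - 2))
      ((X 0 * X 1 * X 2 ^ 3 + C s * X 0 ^ 5 + C t * X 1 ^ 5 : MvPolynomial (Fin 3) R) ^ (p - 1)) =
      s ^ (4 * (2 * p - 1) / 15) * t ^ ((2 * p - 1) / 15) *
        (Nat.multinomial Finset.univ
          ![(p - 2) / 3, 4 * (2 * p - 1) / 15, (2 * p - 1) / 15] : R) := by
  have hx : (p - 2) / 3 + 5 * (4 * (2 * p - 1) / 15) = 3 * p - 2 := by omega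
  have hy : (p - 2) / 3 + 5 * ((2 * p - 1) / 15) = p - 1 := by omega
  have hz : 3 * ((p - 2) / 3) = p - 2 := by omega
  have hsum : (p - 2) / 3 + 4 * (2 * p - 1) / 15 + (2 * p - 1) / 15 = p - 1 := by omega
  simpa only [hx, hy, hz, hsum] using
    coeff_quintic_pow s t ((p - 2) / 3) (4 * (2 * p - 1) / 15) ((2 * p - 1) / 15)

end Quintic

theorem stmt_8_general {p : ℕ} (hp : p.Prime) (h3 : p % 3 = 2) (h5 : p % 5 = 3)
    {R : Type*} [CommSemiring R] [NoZeroDivisors R] [CharP R p] {s t : R} (hs : s ≠ 0)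
    (ht : t ≠ 0) :
    MvPolynomial.coeff
      (Finsupp.single (0 : Fin 3) (3 * p - 2) + Finsupp.single 1 (p - 1) +
        Finsupp.single 2 (p - 2))
      ((X 0 * X 1 * X 2 ^ 3 + C s * X 0 ^ 5 + C t * X 1 ^ 5 :
          MvPolynomial (Fin 3) R) ^ (p - 1)) =
      s ^ (4 * (2 * p - 1) / 15) * t ^ ((2 * p - 1) / 15) *
        ((((p - 1).factorial /
            (((p - 2) / 3).factorial * (4 * (2 * p - 1) / 15).factorial *
              ((2 * p - 1) / 15).factorial)) : ℕ) : R) ∧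
    MvPolynomial.coeff
      (Finsupp.single (0 : Fin 3) (3 * p - 2) + Finsupp.single 1 (p - 1) +
        Finsupp.single 2 (p - 2))
      ((X 0 * X 1 * X 2 ^ 3 + C s * X 0 ^ 5 + C t * X 1 ^ 5 :
          MvPolynomial (Fin 3) R) ^ (p - 1)) ≠ 0 := by
  have hsum : (p - 2) / 3 + 4 * (2 * p - 1) / 15 + (2 * p - 1) / 15 = p - 1 := by omega
  have hM : (Nat.multinomial Finset.univ
      ![(p - 2) / 3, 4 * (2 * p - 1) / 15, (2 * p - 1) / 15] : R) ≠ 0 := by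
    rw [Ne, CharP.cast_eq_zero_iff R p]
    apply not_dvd_multinomial_of_sum_lt hp
    simpa only [Fin.sum_univ_three, Matrix.cons_val, hsum] using Nat.sub_one_lt hp.ne_zero
  rw [coeff_quintic_pow_pred h3 h5]
  refine ⟨?_, mul_ne_zero (mul_ne_zero (pow_ne_zero _ hs) (pow_ne_zero _ ht)) hM⟩
  rw [Nat.multinomial_univ_three, hsum]

/-- If `p > 5` is a prime with `p ≡ 2 (mod 3)` and `p ≡ 3 (mod 5)`, then the
coefficient of `x^(3p-2)*y^(p-1)*z^(p-2)` in `F^(p-1)` equals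
`s^(4(2p-1)/15) * t^((2p-1)/15)` times the multinomial coefficient
`(p-1)!/(((p-2)/3)! (4(2p-1)/15)! ((2p-1)/15)!)` viewed in `K`, and is nonzero. -/
theorem stmt_8 (p : ℕ) (hp : p.Prime) (hp5 : 5 < p) (h3 : p % 3 = 2) (h5 : p % 5 = 3)
    (K : Type*) [Field K] [CharP K p] (s t : K) (hs : s ≠ 0) (ht : t ≠ 0) :
    MvPolynomial.coeff
      (Finsupp.single (0 : Fin 3) (3 * p - 2) + Finsupp.single 1 (p - 1) +
        Finsupp.single 2 (p - 2))
      ((X 0 * X 1 * X 2 ^ 3 + C s * X 0 ^ 5 + C t * X 1 ^ 5 :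
          MvPolynomial (Fin 3) K) ^ (p - 1)) =
      s ^ (4 * (2 * p - 1) / 15) * t ^ ((2 * p - 1) / 15) *
        ((((p - 1).factorial /
            (((p - 2) / 3).factorial * (4 * (2 * p - 1) / 15).factorial *
              ((2 * p - 1) / 15).factorial)) : ℕ) : K) ∧
    MvPolynomial.coeff
      (Finsupp.single (0 : Fin 3) (3 * p - 2) + Finsupp.single 1 (p - 1) +
        Finsupp.single 2 (p - 2))
      ((X 0 * X 1 * X 2 ^ 3 + C s * X 0 ^ 5 + C t * X 1 ^ 5 :
          MvPolynomial (Fin 3) K) ^ (p - 1)) ≠ 0 :=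
  stmt_8_general hp h3 h5 hs ht
end

section
/- Let p be a prime and m a nonnegative integer with p + 1 = 15m + 12. Let K be a field, and let Y, Z ∈ K with Y ≠ 0 and Y^p + Y = -Z^(p+1). Set y = Y^(3m+2) and z = Y^(-(m+1)) * Z^(5m+4) (inverse taken in K). Then 1 + y^5 + y*z^3 = 0. (Hence the Hermitian curve Y^p + Y = -Z^(p+1) covers the affine curve 1 + y^5 + y*z^3 = 0, proving maximality of the genus-5 trigonal curve T_p over F_{p^2} when p ≡ 11 (mod 15).) -/
theorem mul_pow_mul_inv_pow_mul_pow {G₀ : Type*} [CommGroupWithZero G₀] {Y : G₀} (hY : Y ≠ 0)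
    (W : G₀) {a b r : ℕ} (hb : b * r = a + 1) :
    Y * (Y ^ a * ((Y ^ b)⁻¹ * W) ^ r) = W ^ r := by
  rw [mul_pow, inv_pow, ← pow_mul, hb, ← mul_assoc, ← pow_succ',
    mul_inv_cancel_left₀ (pow_ne_zero _ hY)]

theorem mul_one_add_pow_add_mul_pow {K : Type*} [Semifield K] {Y : K} (hY : Y ≠ 0) (Z : K)
    {a b c r : ℕ} (s : ℕ) (hb : b * r = a + 1) :
    Y * (1 + (Y ^ a) ^ s + Y ^ a * ((Y ^ b)⁻¹ * Z ^ c) ^ r) =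
      Y ^ (a * s + 1) + Y + Z ^ (c * r) := by
  rw [mul_add, mul_pow_mul_inv_pow_mul_pow hY _ hb]
  ring

theorem stmt_14_general {K : Type*} [Field K] {Y Z : K} {q a b c r s : ℕ}
    (ha : a * s + 1 = q) (hb : b * r = a + 1) (hc : c * r = q + 1) (hY : Y ≠ 0)
    (hH : Y ^ q + Y = -Z ^ (q + 1)) :
    1 + (Y ^ a) ^ s + Y ^ a * ((Y ^ b)⁻¹ * Z ^ c) ^ r = 0 := by
  refine (mul_eq_zero_iff_left hY).mp ?_
  rw [mul_one_add_pow_add_mul_pow hY Z s hb, ha, hc, hH, neg_add_cancel]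

/-- If `p + 1 = 15m + 12`, the Hermitian curve `Y^p + Y = -Z^(p+1)` covers the
affine curve `1 + y^5 + y*z^3 = 0` via `y = Y^(3m+2)`, `z = Y^(-(m+1)) Z^(5m+4)`. -/
theorem stmt_14 (p : ℕ) (hp : p.Prime) (m : ℕ) (hpm : p + 1 = 15 * m + 12)
    (K : Type*) [Field K] (Y Z : K) (hY : Y ≠ 0)
    (hH : Y ^ p + Y = -Z ^ (p + 1)) :
    1 + (Y ^ (3 * m + 2)) ^ 5 +
      Y ^ (3 * m + 2) * ((Y ^ (m + 1))⁻¹ * Z ^ (5 * m + 4)) ^ 3 = 0 :=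
  stmt_14_general (by lia) (by lia) (by lia) hY hH
end

section
/- Let a, b, c be positive integers with b + 2c = a, let g = gcd(a, gcd(b, c)), and let n = a*b/g. Let p be a prime and m a positive integer with p + 1 = n*m. Let K be a field, and let Y, Z ∈ K with Y ≠ 0 and 1 + Y^(p+1) + Z^(p+1) = 0. Set y = Y^(b*m/g) and z = Y^(-(c*m/g)) * Z^(a*m/g) (inverse taken in K; note g divides a, b, and c, so these exponents are integers). Then 1 + y^a + z^b * y^c = 0. (Hence the curve C_{p,a,b,c} given by x^a + y^a + z^b*x^c*y^c = 0 is covered by the Hermitian curve and is maximal over F_{p^2} when p ≡ -1 (mod n).) -/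
/-! The monomials `y = Y^(bm/g)` and `z = Y^(-(cm/g)) Z^(am/g)` have weights chosen so that, with
`N = (ab/g)m`, one gets `y^a = Y^N`, while in `z^b y^c` the powers of `Y` cancel and leave `Z^N`.
The equation of the image point is therefore literally that of the Fermat curve of degree `N`. -/

theorem inv_pow_mul_pow_mul_pow_pow_of_mul_eq_mul {M : Type*} [CommMonoid M] (u : Mˣ) (z : M)
    {b c i j : ℕ} (h : i * c = j * b) :
    (↑(u ^ j)⁻¹ * z) ^ b * ((u : M) ^ i) ^ c = z ^ b := by
  have hu : ((u : M) ^ i) ^ c = (↑(u ^ j) : M) ^ b := by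
    rw [Units.val_pow_eq_pow_val, ← pow_mul, ← pow_mul, h]
  rw [hu, ← mul_pow, mul_right_comm, Units.inv_mul, one_mul]

theorem stmt_15_general {R : Type*} [CommRing R] (Y : Rˣ) (Z : R) {a b c g m : ℕ} (hg : 0 < g)
    (hga : g ∣ a) (hgb : g ∣ b) (hgc : g ∣ c)
    (hH : 1 + (Y : R) ^ (a * b / g * m) + Z ^ (a * b / g * m) = 0) :
    1 + ((Y : R) ^ (b * m / g)) ^ a +
      (↑(Y ^ (c * m / g))⁻¹ * Z ^ (a * m / g)) ^ b * ((Y : R) ^ (b * m / g)) ^ c = 0 := by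
  obtain ⟨a, rfl⟩ := hga
  obtain ⟨b, rfl⟩ := hgb
  obtain ⟨c, rfl⟩ := hgc
  simp only [mul_assoc, Nat.mul_div_cancel_left _ hg] at hH ⊢
  have cancel_Y : b * m * (g * c) = c * m * (g * b) := by ring
  have degree_y : b * m * (g * a) = a * (g * (b * m)) := by ring
  have degree_z : a * m * (g * b) = a * (g * (b * m)) := by ring
  rw [inv_pow_mul_pow_mul_pow_pow_of_mul_eq_mul Y _ cancel_Y, ← pow_mul, ← pow_mul, degree_y,
    degree_z]
  exact hH

/-- Let `b + 2c = a`, `g = gcd(a, gcd(b, c))` and `n = a*b/g`. If `p + 1 = n*m`,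
then the Hermitian/Fermat curve `1 + Y^(p+1) + Z^(p+1) = 0` covers the affine
curve `1 + y^a + z^b*y^c = 0` via `y = Y^(bm/g)`, `z = Y^(-(cm/g)) Z^(am/g)`. -/
theorem stmt_15 (a b c : ℕ) (ha : 0 < a) (hb : 0 < b) (hc : 0 < c)
    (habc : b + 2 * c = a)
    (p : ℕ) (hp : p.Prime) (m : ℕ) (hm : 0 < m)
    (hpm : p + 1 = a * b / Nat.gcd a (Nat.gcd b c) * m)
    (K : Type*) [Field K] (Y Z : K) (hY : Y ≠ 0)
    (hH : 1 + Y ^ (p + 1) + Z ^ (p + 1) = 0) :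
    1 + (Y ^ (b * m / Nat.gcd a (Nat.gcd b c))) ^ a +
      ((Y ^ (c * m / Nat.gcd a (Nat.gcd b c)))⁻¹ *
        Z ^ (a * m / Nat.gcd a (Nat.gcd b c))) ^ b *
      (Y ^ (b * m / Nat.gcd a (Nat.gcd b c))) ^ c = 0 := by
  have hgbc := Nat.gcd_dvd_right a (b.gcd c)
  simpa using stmt_15_general (Units.mk0 Y hY) Z (Nat.gcd_pos_of_pos_left _ ha)
    (Nat.gcd_dvd_left _ _) (hgbc.trans (Nat.gcd_dvd_left _ _)) (hgbc.trans (Nat.gcd_dvd_right _ _))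
    (hpm ▸ hH)
end

section
/- Let a, b, c be positive integers with b + 2c = a and gcd(a, b) = 1, and let d be an integer with 2 ≤ d, a dividing d - 2, and b dividing d. Let p be a prime and m a nonnegative integer with p + 1 = a*b*m + d. Let K be a field, and let Y, Z ∈ K with Y ≠ 0 and Y^p + Y = -Z^(p+1). Set y = Y^(b*m + (d-2)/a) and z = Y^(-(c*m + (c*(d-2)+a)/(a*b))) * Z^(a*m + d/b) (inverse taken in K; all the displayed exponents are integers, using that a*b divides c*(d-2)+a). Then 1 + y^a + z^b * y^c = 0. (Hence the curve C_{p,a,b,c} given by x^a + y^a + z^b*x^c*y^c = 0 is covered by the Hermitian curve Y^p + Y = -Z^(p+1) and is maximal over F_{p^2} when p ≡ d - 1 (mod a*b).) -/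
/-!
Write `r`, `s`, `t` for the exponents with `y = Y ^ r` and `z = Y ^ (-s) * Z ^ t`. They satisfy
`r * a + 1 = p`, `t * b = p + 1` and `s * b = r * c + 1`, so that
`z ^ b * y ^ c = Y⁻¹ * Z ^ (p + 1)`. Hence `1 + y ^ a + z ^ b * y ^ c` is
`Y⁻¹ * (Y ^ p + Y + Z ^ (p + 1))`, which vanishes on the Hermitian curve.
-/

theorem mul_dvd_mul_add_of_coprime {a b c n e : ℕ} (habc : b + n * c = a) (hcop : a.Coprime b)
    (ha : a ∣ e) (hb : b ∣ e + n) : a * b ∣ c * e + a := by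
  have hnb : n.Coprime b := by
    rw [← habc, Nat.coprime_self_add_left] at hcop
    exact hcop.coprime_mul_right
  have hb_dvd : b ∣ c * e + a := by
    have hn_mul : n * (c * e + a) + b * e = a * (e + n) := by rw [← habc]; ring
    refine hnb.symm.dvd_of_dvd_mul_left ((Nat.dvd_add_left (dvd_mul_right b e)).mp ?_)
    exact hn_mul ▸ hb.mul_left a
  exact hcop.mul_dvd_of_dvd_of_dvd (dvd_add (ha.mul_left c) dvd_rfl) hb_dvd

theorem inv_pow_mul_pow_pow_mul_pow_pow {M : Type*} [CommMonoid M] (Y : Mˣ) (Z : M)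
    {b c r s t : ℕ} (hs : s * b = r * c + 1) :
    ((↑(Y ^ s)⁻¹ : M) * Z ^ t) ^ b * ((Y : M) ^ r) ^ c = (↑Y⁻¹ : M) * Z ^ (t * b) := by
  have hY : ((Y ^ s)⁻¹) ^ b * (Y ^ r) ^ c = Y⁻¹ := by
    rw [inv_pow, ← pow_mul, ← pow_mul, hs, pow_succ', mul_inv, inv_mul_cancel_right]
  rw [mul_pow, ← pow_mul Z, mul_right_comm]
  exact_mod_cast congrArg (fun u : Mˣ => (u : M) * Z ^ (t * b)) hY

theorem one_add_pow_add_mul_pow_eq_zero {R : Type*} [CommRing R] (Y : Rˣ) (Z : R)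
    {a b c r s t : ℕ} (hs : s * b = r * c + 1)
    (hH : (Y : R) ^ (r * a + 1) + Y = -Z ^ (t * b)) :
    1 + ((Y : R) ^ r) ^ a + ((↑(Y ^ s)⁻¹ : R) * Z ^ t) ^ b * ((Y : R) ^ r) ^ c = 0 := by
  rw [inv_pow_mul_pow_pow_mul_pow_pow Y Z hs]
  calc 1 + ((Y : R) ^ r) ^ a + ↑Y⁻¹ * Z ^ (t * b)
      = ↑Y⁻¹ * ((Y : R) ^ (r * a + 1) + Y + Z ^ (t * b)) := by
        rw [mul_add, mul_add, pow_succ', Units.inv_mul_cancel_left, Units.inv_mul, pow_mul (Y : R),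
          add_comm 1]
    _ = 0 := by rw [hH, neg_add_cancel, mul_zero]

theorem stmt_17_general (a b c : ℕ) (ha : 0 < a) (d : ℕ) (hd2 : 2 ≤ d) (hda : a ∣ d - 2)
    (hdb : b ∣ d) (hdab : a * b ∣ c * (d - 2) + a) (p m : ℕ) (hpm : p + 1 = a * b * m + d)
    (R : Type*) [CommRing R] (Y : Rˣ) (Z : R) (hH : (Y : R) ^ p + Y = -Z ^ (p + 1)) :
    1 + ((Y : R) ^ (b * m + (d - 2) / a)) ^ a +
      ((↑(Y ^ (c * m + (c * (d - 2) + a) / (a * b)))⁻¹ : R) * Z ^ (a * m + d / b)) ^ b *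
      ((Y : R) ^ (b * m + (d - 2) / a)) ^ c = 0 := by
  have hk := Nat.div_mul_cancel hda
  have hl := Nat.div_mul_cancel hdb
  have hq := Nat.div_mul_cancel hdab
  have hr : (b * m + (d - 2) / a) * a + 1 = p := by
    rw [add_mul, hk, mul_right_comm, mul_comm b a]
    omega
  have ht : (a * m + d / b) * b = p + 1 := by
    rw [add_mul, hl, mul_right_comm, hpm]
  have hs : (c * m + (c * (d - 2) + a) / (a * b)) * b = (b * m + (d - 2) / a) * c + 1 := by
    refine Nat.eq_of_mul_eq_mul_left ha ?_
    linear_combination hq - c * hk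
  exact one_add_pow_add_mul_pow_eq_zero Y Z hs (by rwa [hr, ht])

/-- Let `b + 2c = a` with `gcd(a,b) = 1`, and `d ≥ 2` with `a ∣ d - 2`, `b ∣ d`.
If `p + 1 = a*b*m + d`, the Hermitian curve `Y^p + Y = -Z^(p+1)` covers the
affine curve `1 + y^a + z^b*y^c = 0` via `y = Y^(bm + (d-2)/a)`,
`z = Y^(-(cm + (c(d-2)+a)/(ab))) Z^(am + d/b)`. -/
theorem stmt_17 (a b c : ℕ) (ha : 0 < a) (hb : 0 < b) (hc : 0 < c)
    (habc : b + 2 * c = a) (hcop : Nat.gcd a b = 1)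
    (d : ℕ) (hd2 : 2 ≤ d) (hda : a ∣ d - 2) (hdb : b ∣ d)
    (p : ℕ) (hp : p.Prime) (m : ℕ) (hpm : p + 1 = a * b * m + d)
    (K : Type*) [Field K] (Y Z : K) (hY : Y ≠ 0)
    (hH : Y ^ p + Y = -Z ^ (p + 1)) :
    1 + (Y ^ (b * m + (d - 2) / a)) ^ a +
      ((Y ^ (c * m + (c * (d - 2) + a) / (a * b)))⁻¹ *
        Z ^ (a * m + d / b)) ^ b *
      (Y ^ (b * m + (d - 2) / a)) ^ c = 0 := by
  have hdab : a * b ∣ c * (d - 2) + a :=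
    mul_dvd_mul_add_of_coprime habc hcop hda (by rwa [Nat.sub_add_cancel hd2])
  simpa using stmt_17_general a b c ha d hd2 hda hdb hdab p m hpm K (Units.mk0 Y hY) Z hH
end
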